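/- Let F be an absolutely continuous distribution function with density f, let a_n > 0 and b_n ∈ ℝ, and let G be a continuous nondegenerate distribution function with density g. Suppose that F^n(a_n x + b_n) → G(x) as n → ∞ for every x ∈ ℝ, and that g_n(x) := n a_n f(a_n x + b_n) F^{n-1}(a_n x + b_n) converges to g(x) locally uniformly on {x : G(x) > 0}. Then for every fixed integer k ≥ 1 the density g_n^{(k)}(x) = [n!/((k-1)!(n-k)!)] a_n f(a_n x + b_n) F(a_n x + b_n)^{n-k} (1 − F(a_n x + b_n))^{k-1} converges, locally uniformly on {x : G(x) > 0}, to g^{(k)}(x) = g(x) (−log G(x))^{k-1}/(k−1)!. -/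

import Mathlib

open MeasureTheory Filter Real

/-!
The `k`-th density is `gₙ` times a factor that depends only on `n` and on `u = F (aₙ x + bₙ)`, and
that factor converges locally uniformly to `(-log G)^(k-1) / (k-1)!` because `n (1 - u) → -log G`.
To pass to the limit in the product one needs `g` to be locally bounded on `{G > 0}`, which is not
assumed. It comes from max-stability: comparing the normalizations at the indices `n` and `⌈c n⌉`
gives, for every `c` near `1`, an affine map `T_c` near the identity with `G ∘ T_c = G ^ c`.
Dividing `log G ∘ T_c - log G = (c - 1) log G` by the size of `(T_c - id, c - 1)` and letting
`c → 1` yields the differential equation `(A x + B) (log G)' = C log G` with `(A, B, C) ≠ 0`. It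
bounds `(log G)'` near every point where `A x + B ≠ 0`, and at a zero `x₀` of `A x + B` it expresses
`(log G)'` through the difference quotients of `log G` at `x₀`.
-/

section Development

open Set Asymptotics
open scoped Topology Nat

section PowerLimits

variable {ι : Type*} {l : Filter ι} {N : ι → ℕ} {u : ι → ℝ} {L : ℝ}

lemma tendsto_pow_rpow_of_tendsto_div {M : ι → ℕ} {c : ℝ} (hu : ∀ i, 0 ≤ u i)
    (hN : ∀ᶠ i in l, N i ≠ 0) (hMN : Tendsto (fun i ↦ (M i : ℝ) / N i) l (𝓝 c))
    (hc : L ≠ 0 ∨ 0 < c) (h : Tendsto (fun i ↦ u i ^ N i) l (𝓝 L)) :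
    Tendsto (fun i ↦ u i ^ M i) l (𝓝 (L ^ c)) := by
  refine (h.rpow hMN hc).congr' ?_
  filter_upwards [hN] with i hi
  rw [← rpow_natCast, ← rpow_mul (hu i), mul_div_cancel₀ _ (Nat.cast_ne_zero.2 hi), rpow_natCast]

lemma tendsto_one_of_tendsto_pow (hu : ∀ i, 0 ≤ u i) (hN : Tendsto N l atTop) (hL : L ≠ 0)
    (h : Tendsto (fun i ↦ u i ^ N i) l (𝓝 L)) : Tendsto u l (𝓝 1) := by
  have hinv : Tendsto (fun i ↦ ((1 : ℕ) : ℝ) / N i) l (𝓝 0) := by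
    simpa [Function.comp_def] using (tendsto_inv_atTop_nhds_zero_nat (𝕜 := ℝ)).comp hN
  simpa using tendsto_pow_rpow_of_tendsto_div hu (hN.eventually_ne_atTop 0) hinv (.inl hL) h

lemma tendsto_mul_one_sub_of_tendsto_pow (hu : ∀ i, 0 ≤ u i) (hN : Tendsto N l atTop)
    (hL : L ≠ 0) (h : Tendsto (fun i ↦ u i ^ N i) l (𝓝 L)) :
    Tendsto (fun i ↦ N i * (1 - u i)) l (𝓝 (-log L)) := by
  have hu_one := tendsto_one_of_tendsto_pow hu hN hL h
  have hlog : Tendsto (fun i ↦ -(N i * log (u i))) l (𝓝 (-log L)) := by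
    simpa only [log_pow] using (h.log hL).neg
  have hulog : Tendsto (fun i ↦ u i * -(N i * log (u i))) l (𝓝 (-log L)) := by
    simpa using hu_one.mul hlog
  have hu_pos : ∀ᶠ i in l, 0 < u i := hu_one.eventually_const_lt one_pos
  refine tendsto_of_tendsto_of_tendsto_of_le_of_le' hulog hlog ?_ ?_
  · filter_upwards [hu_pos] with i hi
    have hle : -(u i * log (u i)) ≤ 1 - u i := by
      have := mul_le_mul_of_nonneg_left (one_sub_inv_le_log_of_pos hi) hi.le
      rw [mul_sub, mul_inv_cancel₀ hi.ne'] at this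
      linarith
    linarith [mul_le_mul_of_nonneg_left hle (N i).cast_nonneg]
  · filter_upwards [hu_pos] with i hi
    have hle : 1 - u i ≤ -log (u i) := by linarith [log_le_sub_one_of_pos hi]
    linarith [mul_le_mul_of_nonneg_left hle (N i).cast_nonneg]

/-- The quotient of the density of the `k`-th largest of `n` observations by that of the largest
one, at a point where the distribution function takes the value `u`. It is arranged so that
`n * (1 - u)`, the quantity that converges, appears explicitly. -/
noncomputable def kthExtremeRatio (k n : ℕ) (u : ℝ) : ℝ :=
  n.descFactorial k / (n : ℝ) ^ k * ((n * (1 - u)) ^ (k - 1) / (k - 1)! / u ^ (k - 1))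

lemma mul_kthExtremeRatio {k n : ℕ} (hk : 1 ≤ k) (hkn : k < n) (a y u : ℝ) :
    n * a * y * u ^ (n - 1) * kthExtremeRatio k n u =
      n ! / ((k - 1)! * (n - k)!) * a * y * u ^ (n - k) * (1 - u) ^ (k - 1) := by
  rcases eq_or_ne u 0 with rfl | hu
  · simp [zero_pow (show n - 1 ≠ 0 by omega), zero_pow (show n - k ≠ 0 by omega)]
  have hpow : u ^ (n - 1) = u ^ (n - k) * u ^ (k - 1) := by rw [← pow_add]; congr 1; omega
  have hn_pow : (n : ℝ) ^ k = n * n ^ (k - 1) := by rw [← pow_succ']; congr 1; omega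
  have hn_fact : (n ! : ℝ) = (n - k)! * n.descFactorial k :=
    mod_cast (Nat.factorial_mul_descFactorial hkn.le).symm
  have hn : (n : ℝ) ≠ 0 := by exact_mod_cast (show n ≠ 0 by omega)
  have hnk : ((n - k)! : ℝ) ≠ 0 := by positivity
  rw [kthExtremeRatio, mul_pow, hpow, hn_pow, hn_fact]
  field_simp

lemma tendsto_kthExtremeRatio (k : ℕ) (hu : ∀ i, 0 ≤ u i) (hN : Tendsto N l atTop) (hL : L ≠ 0)
    (h : Tendsto (fun i ↦ u i ^ N i) l (𝓝 L)) :
    Tendsto (fun i ↦ kthExtremeRatio k (N i) (u i)) l (𝓝 ((-log L) ^ (k - 1) / (k - 1)!)) := by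
  have hfac : Tendsto (fun n : ℕ ↦ (n.descFactorial k : ℝ) / (n : ℝ) ^ k) atTop (𝓝 1) := by
    refine (isEquivalent_iff_tendsto_one ?_).1 (isEquivalent_descFactorial k)
    filter_upwards [eventually_ne_atTop 0] with n hn
    positivity
  have htail := ((tendsto_mul_one_sub_of_tendsto_pow hu hN hL h).pow (k - 1)).div_const
    ((k - 1)! : ℝ)
  have hpow := (tendsto_one_of_tendsto_pow hu hN hL h).pow (k - 1)
  simpa [kthExtremeRatio] using (hfac.comp hN).mul (htail.div hpow (by simp))

end PowerLimits

/-- The affine map whose displacement from the identity is `x ↦ v.1 * x + v.2`. This choice of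
coefficients makes the identity correspond to `v = 0`. -/
def affinePerturb (v : ℝ × ℝ) (x : ℝ) : ℝ := x + (v.1 * x + v.2)

lemma continuous_affinePerturb (x : ℝ) : Continuous (affinePerturb · x) := by
  unfold affinePerturb
  fun_prop

section MonotoneFamilies

-- If `f` is not integrable, the integral drops to the junk value `0`, so it is monotone only up to
-- points where it is positive.
lemma monotoneOn_Iic_integral_of_pos {f : ℝ → ℝ} (hf : ∀ x, 0 ≤ f x) {r : ℝ}
    (hr : 0 < ∫ t in Iic r, f t) : MonotoneOn (fun x ↦ ∫ t in Iic x, f t) (Iic r) := by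
  intro x _ y hy hxy
  have hint : IntegrableOn f (Iic r) := not_imp_comm.1 integral_undef hr.ne'
  exact setIntegral_mono_set (hint.mono_set (Iic_subset_Iic.2 hy)) (.of_forall hf)
    (Iic_subset_Iic.2 hxy).eventuallyLE

lemma monotoneOn_Iic_comp_affine_pow {F : ℝ → ℝ} (hF_nonneg : ∀ x, 0 ≤ F x)
    (hF : ∀ r, 0 < F r → MonotoneOn F (Iic r)) {a : ℝ} (ha : 0 < a) (b : ℝ) (n : ℕ) {r : ℝ}
    (hr : 0 < F (a * r + b) ^ n) : MonotoneOn (fun x ↦ F (a * x + b) ^ n) (Iic r) := by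
  rcases eq_or_ne n 0 with rfl | hn
  · simpa using monotoneOn_const
  intro x hx y hy hxy
  have hpos : 0 < F (a * r + b) := (hF_nonneg _).lt_of_ne' fun h ↦ by simp [h, hn] at hr
  have hle : ∀ {s t : ℝ}, s ≤ t → a * s + b ≤ a * t + b := fun h ↦ by gcongr
  exact pow_le_pow_left₀ (hF_nonneg _) (hF _ hpos (hle hx) (hle hy) (hle hxy)) n

variable {ι : Type*} {l : Filter ι} {H : ι → ℝ → ℝ} {G : ℝ → ℝ}

lemma eventually_lt_of_tendsto_of_monotoneOn_Iic {x y : ι → ℝ} {L M : ℝ}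
    (hH : ∀ i r, 0 < H i r → MonotoneOn (H i) (Iic r))
    (hx : Tendsto (fun i ↦ H i (x i)) l (𝓝 L)) (hy : Tendsto (fun i ↦ H i (y i)) l (𝓝 M))
    (hL : 0 < L) (hLM : L < M) : ∀ᶠ i in l, x i < y i := by
  filter_upwards [hx.eventually_lt hy hLM, hx.eventually_const_lt hL] with i hlt hpos
  by_contra! hle
  exact hlt.not_ge (hH i _ hpos hle self_mem_Iic hle)

lemma tendsto_prod_nhds_of_monotoneOn_Iic (hH : ∀ i r, 0 < H i r → MonotoneOn (H i) (Iic r))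
    (hlim : ∀ x, Tendsto (H · x) l (𝓝 (G x))) {x₀ : ℝ} (hG : ContinuousAt G x₀)
    (h₀ : 0 < G x₀) : Tendsto (fun y : ι × ℝ ↦ H y.1 y.2) (l ×ˢ 𝓝 x₀) (𝓝 (G x₀)) := by
  have hright : Tendsto G (𝓝[>] x₀) (𝓝 (G x₀)) := hG.mono_left nhdsWithin_le_nhds
  have hleft : Tendsto G (𝓝[<] x₀) (𝓝 (G x₀)) := hG.mono_left nhdsWithin_le_nhds
  refine tendsto_order.2 ⟨fun c hc ↦ ?_, fun c hc ↦ ?_⟩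
  · obtain ⟨z, hz, hzx⟩ := ((hleft.eventually_const_lt hc).and self_mem_nhdsWithin).exists
    obtain ⟨r, hr, hxr⟩ := ((hright.eventually_const_lt h₀).and self_mem_nhdsWithin).exists
    filter_upwards [(((hlim z).eventually_const_lt hz).and
      ((hlim r).eventually_const_lt hr)).prod_mk (Icc_mem_nhds hzx hxr)] with y hy
    obtain ⟨⟨hcz, hr_pos⟩, hzy, hyr⟩ := hy
    exact hcz.trans_le (hH _ r hr_pos (hzy.trans hyr) hyr hzy)
  · obtain ⟨r, ⟨hr_pos, hrc⟩, hxr⟩ := (((hright.eventually_const_lt h₀).and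
      (hright.eventually_lt_const hc)).and self_mem_nhdsWithin).exists
    filter_upwards [(((hlim r).eventually_const_lt hr_pos).and
      ((hlim r).eventually_lt_const hrc)).prod_mk (Iic_mem_nhds hxr)] with y hy
    obtain ⟨⟨hpos, hc⟩, hyr⟩ := hy
    exact (hH _ r hpos hyr self_mem_Iic hyr).trans_lt hc

lemma eventually_forall_eventually_abs_sub_le
    (hH : ∀ i r, 0 < H i r → MonotoneOn (H i) (Iic r))
    (hlim : ∀ x, Tendsto (H · x) l (𝓝 (G x))) (hG : Continuous G) (hG_mono : Monotone G) {p : ℝ}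
    (hp_pos : 0 < G p) (hp : ∀ y, G y = G p → y = p) {ε : ℝ} (hε : 0 < ε) {κ : Type*}
    (m : Filter κ) :
    ∀ᶠ L in 𝓝 (G p), ∀ (N : κ → ι) (x : κ → ℝ), Tendsto N m l →
      Tendsto (fun j ↦ H (N j) (x j)) m (𝓝 L) → ∀ᶠ j in m, |x j - p| ≤ ε := by
  obtain ⟨y, hy_pos, hyp⟩ : ∃ y, 0 < G y ∧ y ∈ Ioo (p - ε) p :=
    (((hG.tendsto p).mono_left nhdsWithin_le_nhds |>.eventually_const_lt hp_pos).and
      (Ioo_mem_nhdsLT (sub_lt_self p hε))).exists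
  have hGy : G y < G p := (hG_mono hyp.2.le).lt_of_ne fun h ↦ hyp.2.ne (hp y h)
  have hGz : G p < G (p + ε) := (hG_mono (by linarith)).lt_of_ne' fun h ↦ by linarith [hp _ h]
  filter_upwards [Ioo_mem_nhds hGy hGz] with L ⟨hyL, hLz⟩ N x hN hx
  have hHN (j : κ) := hH (N j)
  filter_upwards [eventually_lt_of_tendsto_of_monotoneOn_Iic hHN ((hlim y).comp hN) hx hy_pos hyL,
    eventually_lt_of_tendsto_of_monotoneOn_Iic hHN hx ((hlim (p + ε)).comp hN)
      (hy_pos.trans hyL) hLz] with j hyx hxz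
  exact abs_le.2 ⟨by linarith [hyp.1], by linarith⟩

lemma exists_forall_norm_le_of_abs_affinePerturb_sub_le {p q : ℝ} (hpq : p ≠ q) {δ : ℝ}
    (hδ : 0 < δ) :
    ∃ ε > 0, ∀ v : ℝ × ℝ, |affinePerturb v p - p| ≤ ε → |affinePerturb v q - q| ≤ ε → ‖v‖ ≤ δ := by
  let Ψ : ℝ × ℝ → ℝ × ℝ := fun e ↦ ((e.2 - e.1) / (q - p), e.1 - (e.2 - e.1) / (q - p) * p)
  have hΨ : Tendsto Ψ (𝓝 0) (𝓝 0) := Continuous.tendsto' (by fun_prop) _ _ (by simp [Ψ])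
  have hinv (v : ℝ × ℝ) : Ψ (v.1 * p + v.2, v.1 * q + v.2) = v := by
    have : q - p ≠ 0 := sub_ne_zero.2 hpq.symm
    ext <;> simp only [Ψ] <;> field_simp <;> ring
  obtain ⟨ε, hε, hball⟩ := (Metric.nhds_basis_closedBall.tendsto_iff
    Metric.nhds_basis_closedBall).1 hΨ δ hδ
  refine ⟨ε, hε, fun v hp hq ↦ ?_⟩
  simp only [affinePerturb, add_sub_cancel_left] at hp hq
  have := hball (v.1 * p + v.2, v.1 * q + v.2) (by simpa [Prod.norm_def] using ⟨hp, hq⟩)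
  rwa [hinv, mem_closedBall_zero_iff] at this

lemma exists_affine_of_tendsto_comp_affine [l.NeBot]
    (hH : ∀ i r, 0 < H i r → MonotoneOn (H i) (Iic r))
    (hlim : ∀ x, Tendsto (H · x) l (𝓝 (G x))) (hG : Continuous G) {K : ℝ → ℝ} {v : ι → ℝ × ℝ}
    (hv : ∀ x, Tendsto (fun i ↦ H i (affinePerturb (v i) x)) l (𝓝 (K x))) {δ : ℝ}
    (hvδ : ∀ᶠ i in l, ‖v i‖ ≤ δ) :
    ∃ w : ℝ × ℝ, ‖w‖ ≤ δ ∧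
      ∀ x, 0 < G (affinePerturb w x) → G (affinePerturb w x) = K x := by
  let 𝒰 := Ultrafilter.of l
  have h𝒰 : ↑𝒰 ≤ l := Ultrafilter.of_le l
  obtain ⟨w, hw, hvw⟩ : ∃ w ∈ Metric.closedBall 0 δ, Tendsto v 𝒰 (𝓝 w) :=
    (isCompact_closedBall 0 δ).ultrafilter_le_nhds' (𝒰.map v) <|
      h𝒰 (hvδ.mono fun _ hi ↦ mem_closedBall_zero_iff.2 hi)
  refine ⟨w, mem_closedBall_zero_iff.1 hw, fun x hx ↦ ?_⟩
  have hpoint : Tendsto (fun i ↦ affinePerturb (v i) x) 𝒰 (𝓝 (affinePerturb w x)) :=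
    ((continuous_affinePerturb x).tendsto w).comp hvw
  exact tendsto_nhds_unique
    ((tendsto_prod_nhds_of_monotoneOn_Iic hH hlim hG.continuousAt hx).comp
      ((tendsto_id'.2 h𝒰).prodMk hpoint)) ((hv x).mono_left h𝒰)

end MonotoneFamilies

section AffineScaling

variable {ψ ψ' : ℝ → ℝ} {U : Set ℝ}

lemma exists_affine_mul_deriv_eq_of_frequently (hU : IsOpen U)
    (hψ : ∀ x ∈ U, HasDerivAt ψ (ψ' x) x)
    (h : ∃ᶠ z : (ℝ × ℝ) × ℝ in 𝓝[≠] 0, ∀ x ∈ U, affinePerturb z.1 x ∈ U →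
      ψ (affinePerturb z.1 x) = (1 + z.2) * ψ x) :
    ∃ w : (ℝ × ℝ) × ℝ, w ≠ 0 ∧ ∀ x ∈ U, (w.1.1 * x + w.1.2) * ψ' x = w.2 * ψ x := by
  obtain ⟨z, hz, hscale⟩ := exists_seq_forall_of_frequently (h.and_eventually self_mem_nhdsWithin)
  have hz_zero : Tendsto z atTop (𝓝 0) := hz.mono_right nhdsWithin_le_nhds
  obtain ⟨w, hw, σ, hσ, hzw⟩ := (isCompact_sphere (0 : (ℝ × ℝ) × ℝ) 1).tendsto_subseq
    (x := fun n ↦ ‖z n‖⁻¹ • z n) fun n ↦ by simpa using norm_smul_inv_norm (𝕜 := ℝ) (hscale n).2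
  replace hz_zero := hz_zero.comp hσ.tendsto_atTop
  refine ⟨w, ne_zero_of_mem_unit_sphere ⟨w, hw⟩, fun x hx ↦ ?_⟩
  let d (y : (ℝ × ℝ) × ℝ) : ℝ := y.1.1 * x + y.1.2
  have hd : Continuous d := by fun_prop
  have hd_zero : Tendsto (fun n ↦ d (z (σ n))) atTop (𝓝 0) :=
    (hd.tendsto' 0 0 (by simp [d])).comp hz_zero
  have hd_smul : Tendsto (fun n ↦ ‖z (σ n)‖⁻¹ • d (z (σ n))) atTop (𝓝 (d w)) := by
    refine ((hd.tendsto w).comp hzw).congr fun n ↦ ?_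
    simp [d, mul_add, mul_assoc]
  have hquot := ((hψ x hx).hasFDerivAt.hasFDerivWithinAt (s := univ)).lim hd_zero (by simp) hd_smul
  have hscaled : Tendsto (fun n ↦ ‖z (σ n)‖⁻¹ * (z (σ n)).2 * ψ x) atTop (𝓝 (w.2 * ψ x)) :=
    hzw.snd_nhds.mul_const (ψ x)
  have hmem : ∀ᶠ n in atTop, affinePerturb (z (σ n)).1 x ∈ U := by
    have hpoint : Tendsto (fun y : (ℝ × ℝ) × ℝ ↦ affinePerturb y.1 x) (𝓝 0) (𝓝 x) :=
      ((continuous_affinePerturb x).comp continuous_fst).tendsto' 0 x (by simp [affinePerturb])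
    exact (hpoint.comp hz_zero).eventually (hU.mem_nhds hx)
  have heq : ∀ᶠ n in atTop, ‖z (σ n)‖⁻¹ • (ψ (x + d (z (σ n))) - ψ x) =
      ‖z (σ n)‖⁻¹ * (z (σ n)).2 * ψ x := by
    filter_upwards [hmem] with n hn
    have hψn : ψ (x + d (z (σ n))) = (1 + (z (σ n)).2) * ψ x := (hscale (σ n)).1 x hx hn
    rw [hψn, smul_eq_mul]
    ring
  simpa [d] using tendsto_nhds_unique_of_eventuallyEq hquot hscaled heq

lemma isBigO_one_of_eqOn_const_mul_slope {c : ℝ} (hU : IsOpen U) {x₀ : ℝ} (hx₀ : x₀ ∈ U)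
    (hψ : HasDerivAt ψ (ψ' x₀) x₀) (h : ∀ x ∈ U, x ≠ x₀ → ψ' x = c * slope ψ x₀ x) :
    ψ' =O[𝓝 x₀] (fun _ ↦ (1 : ℝ)) := by
  rw [← nhdsNE_sup_pure, isBigO_sup, isBigO_pure]
  refine ⟨?_, by simp⟩
  refine (((hasDerivAt_iff_tendsto_slope.1 hψ).const_mul c).congr' ?_).isBigO_one ℝ
  filter_upwards [self_mem_nhdsWithin, nhdsWithin_le_nhds (hU.mem_nhds hx₀)] with x hne hx
  exact (h x hx hne).symm

lemma isBigO_one_deriv_of_affine_mul_deriv_eq (hU : IsOpen U)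
    (hψ : ∀ x ∈ U, HasDerivAt ψ (ψ' x) x) {w : (ℝ × ℝ) × ℝ} (hw : w ≠ 0)
    (hode : ∀ x ∈ U, (w.1.1 * x + w.1.2) * ψ' x = w.2 * ψ x) {x₀ : ℝ} (hx₀ : x₀ ∈ U) :
    ψ' =O[𝓝 x₀] (fun _ ↦ (1 : ℝ)) := by
  obtain ⟨⟨A, B⟩, C⟩ := w
  dsimp only at hode
  have hUx₀ := hU.mem_nhds hx₀
  rcases ne_or_eq (A * x₀ + B) 0 with hne | hzero
  · have haffine : ContinuousAt (fun x ↦ A * x + B) x₀ := by fun_prop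
    refine (((hψ x₀ hx₀).continuousAt.const_mul C |>.div haffine hne).congr' ?_).isBigO_one ℝ
    filter_upwards [hUx₀, haffine.eventually_ne hne] with x hx hx_ne
    rw [Pi.div_apply, div_eq_iff hx_ne, ← hode x hx, mul_comm]
  obtain rfl : B = -(A * x₀) := by linarith
  rcases eq_or_ne A 0 with rfl | hA
  · have hC : C ≠ 0 := by
      rintro rfl
      simp at hw
    have hψ_zero : EqOn ψ 0 U := fun x hx ↦ by simpa [hC] using (hode x hx).symm
    refine isBigO_one_of_eqOn_const_mul_slope (c := 0) hU hx₀ (hψ x₀ hx₀) fun x hx _ ↦ ?_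
    rw [zero_mul]
    exact (hψ x hx).unique ((hasDerivAt_const x 0).congr_of_eventuallyEq
      (hψ_zero.eventuallyEq_of_mem (hU.mem_nhds hx)))
  · have hCψ : C * ψ x₀ = 0 := by rw [← hode x₀ hx₀]; ring
    refine isBigO_one_of_eqOn_const_mul_slope (c := C / A) hU hx₀ (hψ x₀ hx₀) fun x hx hne ↦ ?_
    have := sub_ne_zero.2 hne
    rw [slope_def_field]
    field_simp
    linear_combination hode x hx + hCψ

end AffineScaling

lemma eq_zero_of_hasDerivAt_of_monotone_of_eq {G : ℝ → ℝ} (hG : Monotone G) {x y d : ℝ}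
    (hd : HasDerivAt G d x) (hxy : x ≠ y) (h : G y = G x) : d = 0 := by
  have hconst : EqOn G (fun _ ↦ G x) (uIcc x y) := fun z hz ↦ by
    have hmem := hG.mapsTo_uIcc hz
    rwa [h, uIcc_self] at hmem
  have hunique : UniqueDiffWithinAt ℝ (uIcc x y) x :=
    uniqueDiffOn_Icc (min_lt_max.2 hxy) x left_mem_uIcc
  exact hunique.eq_deriv _ hd.hasDerivWithinAt
    ((hasDerivWithinAt_const x _ (G x)).congr hconst rfl)

section MaxStability

lemma frequently_log_comp_affinePerturb_eq {G : ℝ → ℝ}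
    (h : ∀ δ > 0, ∀ᶠ c in 𝓝 (1 : ℝ), ∃ v : ℝ × ℝ, ‖v‖ ≤ δ ∧
      ∀ x, 0 < G (affinePerturb v x) → G (affinePerturb v x) = G x ^ c) :
    ∃ᶠ z : (ℝ × ℝ) × ℝ in 𝓝[≠] 0, ∀ x ∈ {x | 0 < G x}, affinePerturb z.1 x ∈ {x | 0 < G x} →
      log (G (affinePerturb z.1 x)) = (1 + z.2) * log (G x) := by
  refine (nhdsWithin_hasBasis Metric.nhds_basis_closedBall _).frequently_iff.2 fun δ hδ ↦ ?_
  obtain ⟨c, ⟨⟨v, hvδ, hv⟩, hcδ⟩, hc⟩ :=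
    (((h δ hδ).and (Metric.closedBall_mem_nhds 1 hδ)).filter_mono nhdsWithin_le_nhds |>.and
      (self_mem_nhdsWithin (s := {1}ᶜ))).exists
  refine ⟨(v, c - 1), ⟨?_, fun h ↦ hc ?_⟩, fun x hx hvx ↦ ?_⟩
  · rw [mem_closedBall_zero_iff, norm_prod_le_iff]
    exact ⟨hvδ, mem_closedBall_iff_norm.1 hcδ⟩
  · exact sub_eq_zero.1 (congrArg Prod.snd h)
  · rw [hv x hvx, log_rpow hx, add_sub_cancel]

variable {F G g : ℝ → ℝ} {a b : ℕ → ℝ}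

lemma exists_tendsto_comp_affinePerturb_pow_rpow (hF_nonneg : ∀ x, 0 ≤ F x) (ha : ∀ n, a n ≠ 0)
    (hconv : ∀ x, Tendsto (fun n ↦ F (a n * x + b n) ^ n) atTop (𝓝 (G x))) {c : ℝ} (hc : 0 < c) :
    ∃ (N : ℕ → ℕ) (v : ℕ → ℝ × ℝ), Tendsto N atTop atTop ∧ ∀ x,
      Tendsto (fun n ↦ F (a (N n) * affinePerturb (v n) x + b (N n)) ^ N n) atTop
        (𝓝 (G x ^ c)) := by
  let N (n : ℕ) : ℕ := ⌈c * n⌉₊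
  let v (n : ℕ) : ℝ × ℝ := (a n / a (N n) - 1, (b n - b (N n)) / a (N n))
  have hN : Tendsto N atTop atTop :=
    tendsto_nat_ceil_atTop.comp (tendsto_natCast_atTop_atTop.const_mul_atTop hc)
  have hN_div : Tendsto (fun n ↦ (N n : ℝ) / n) atTop (𝓝 c) :=
    (tendsto_nat_ceil_mul_div_atTop hc.le).comp tendsto_natCast_atTop_atTop
  have hv (n : ℕ) (x : ℝ) : a (N n) * affinePerturb (v n) x + b (N n) = a n * x + b n := by
    have := ha (N n)
    simp only [affinePerturb, v]
    field_simp
    ring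
  refine ⟨N, v, hN, fun x ↦ ?_⟩
  simpa only [hv] using tendsto_pow_rpow_of_tendsto_div (fun _ ↦ hF_nonneg _)
    (eventually_ne_atTop 0) hN_div (.inr hc) (hconv x)

lemma eventually_exists_comp_affinePerturb_eq_rpow (hF_nonneg : ∀ x, 0 ≤ F x)
    (hF : ∀ r, 0 < F r → MonotoneOn F (Iic r)) (ha : ∀ n, 0 < a n) (hG : Continuous G)
    (hG_mono : Monotone G)
    (hconv : ∀ x, Tendsto (fun n ↦ F (a n * x + b n) ^ n) atTop (𝓝 (G x)))
    {p q : ℝ} (hpq : p ≠ q) (hp_pos : 0 < G p) (hq_pos : 0 < G q)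
    (hp : ∀ y, G y = G p → y = p) (hq : ∀ y, G y = G q → y = q) {δ : ℝ} (hδ : 0 < δ) :
    ∀ᶠ c in 𝓝 (1 : ℝ), ∃ v : ℝ × ℝ, ‖v‖ ≤ δ ∧
      ∀ x, 0 < G (affinePerturb v x) → G (affinePerturb v x) = G x ^ c := by
  obtain ⟨ε, hε, hεδ⟩ := exists_forall_norm_le_of_abs_affinePerturb_sub_le hpq hδ
  let H (n : ℕ) (x : ℝ) : ℝ := F (a n * x + b n) ^ n
  have hH (n : ℕ) (r : ℝ) (hr : 0 < H n r) : MonotoneOn (H n) (Iic r) :=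
    monotoneOn_Iic_comp_affine_pow hF_nonneg hF (ha n) (b n) n hr
  have hclose {r : ℝ} (hr_pos : 0 < G r) (hr : ∀ y, G y = G r → y = r) :
      ∀ᶠ c in 𝓝 (1 : ℝ), ∀ (N : ℕ → ℕ) (x : ℕ → ℝ), Tendsto N atTop atTop →
        Tendsto (fun n ↦ H (N n) (x n)) atTop (𝓝 (G r ^ c)) → ∀ᶠ n in atTop, |x n - r| ≤ ε := by
    have hrpow : Tendsto (G r ^ ·) (𝓝 (1 : ℝ)) (𝓝 (G r)) :=
      (continuousAt_const_rpow hr_pos.ne').tendsto.trans_eq (by rw [rpow_one])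
    exact hrpow.eventually (eventually_forall_eventually_abs_sub_le hH hconv hG hG_mono hr_pos hr hε
      atTop)
  filter_upwards [hclose hp_pos hp, hclose hq_pos hq, lt_mem_nhds one_pos] with c hcp hcq hc
  obtain ⟨N, v, hN, hv_lim⟩ := exists_tendsto_comp_affinePerturb_pow_rpow hF_nonneg
    (fun n ↦ (ha n).ne') hconv hc
  refine exists_affine_of_tendsto_comp_affine (fun n ↦ hH (N n)) (fun x ↦ (hconv x).comp hN) hG
    hv_lim ?_
  filter_upwards [hcp N _ hN (hv_lim p), hcq N _ hN (hv_lim q)] with n hpn hqn using hεδ _ hpn hqn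

lemma exists_affine_mul_logDeriv_eq (hF_nonneg : ∀ x, 0 ≤ F x)
    (hF : ∀ r, 0 < F r → MonotoneOn F (Iic r)) (ha : ∀ n, 0 < a n) (hG_mono : Monotone G)
    (hg : ∀ x, HasDerivAt G (g x) x)
    (hconv : ∀ x, Tendsto (fun n ↦ F (a n * x + b n) ^ n) atTop (𝓝 (G x))) :
    ∃ w : (ℝ × ℝ) × ℝ, w ≠ 0 ∧
      ∀ x ∈ {x | 0 < G x}, (w.1.1 * x + w.1.2) * (g x / G x) = w.2 * log (G x) := by
  by_cases! h : ∃ p, 0 < G p ∧ g p ≠ 0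
  swap
  · exact ⟨((0, 1), 0), by simp, fun x hx ↦ by simp [h x hx]⟩
  have hG : Continuous G := continuous_iff_continuousAt.2 fun x ↦ (hg x).continuousAt
  have hstrict {r : ℝ} (hr : g r ≠ 0) (y : ℝ) (hy : G y = G r) : y = r := by
    by_contra hne
    exact hr (eq_zero_of_hasDerivAt_of_monotone_of_eq hG_mono (hg r) (Ne.symm hne) hy)
  obtain ⟨p, hp_pos, hgp⟩ := h
  obtain ⟨q, hpq, hq_slope⟩ :=
    exists_hasDerivAt_eq_slope G g (lt_add_one p) hG.continuousOn fun x _ ↦ hg x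
  have hgq : g q ≠ 0 := by
    rw [hq_slope, add_sub_cancel_left, div_one, sub_ne_zero]
    exact fun h ↦ (lt_add_one p).ne' (hstrict hgp _ h)
  have hq_pos : 0 < G q := hp_pos.trans_le (hG_mono hpq.1.le)
  exact exists_affine_mul_deriv_eq_of_frequently (isOpen_lt continuous_const hG)
    (fun x hx ↦ (hg x).log hx.ne') <| frequently_log_comp_affinePerturb_eq fun δ hδ ↦
      eventually_exists_comp_affinePerturb_eq_rpow hF_nonneg hF ha hG hG_mono hconv hpq.1.ne
        hp_pos hq_pos (hstrict hgp) (hstrict hgq) hδ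

lemma isBigO_one_density (hF_nonneg : ∀ x, 0 ≤ F x)
    (hF : ∀ r, 0 < F r → MonotoneOn F (Iic r)) (ha : ∀ n, 0 < a n) (hG_mono : Monotone G)
    (hg : ∀ x, HasDerivAt G (g x) x)
    (hconv : ∀ x, Tendsto (fun n ↦ F (a n * x + b n) ^ n) atTop (𝓝 (G x))) {x₀ : ℝ}
    (hx₀ : 0 < G x₀) : g =O[𝓝 x₀] (fun _ ↦ (1 : ℝ)) := by
  have hG : Continuous G := continuous_iff_continuousAt.2 fun x ↦ (hg x).continuousAt
  obtain ⟨w, hw, hode⟩ := exists_affine_mul_logDeriv_eq hF_nonneg hF ha hG_mono hg hconv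
  have hlogDeriv : (fun x ↦ g x / G x) =O[𝓝 x₀] (fun _ ↦ (1 : ℝ)) :=
    isBigO_one_deriv_of_affine_mul_deriv_eq (isOpen_lt continuous_const hG)
      (fun x hx ↦ (hg x).log hx.ne') hw hode hx₀
  refine (hlogDeriv.mul ((hG.tendsto x₀).isBigO_one ℝ)).congr' ?_ (by simp)
  filter_upwards [(hG.tendsto x₀).eventually_ne hx₀.ne'] with x hx using div_mul_cancel₀ _ hx

end MaxStability

lemma tendstoLocallyUniformlyOn_of_tendsto_prod_nhds {α ι β : Type*} [TopologicalSpace α]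
    [UniformSpace β] {l : Filter ι} {f : ι → α → β} {h : α → β} {s : Set α} (hs : IsOpen s)
    (hh : ContinuousOn h s)
    (hf : ∀ x ∈ s, Tendsto (fun y : ι × α ↦ f y.1 y.2) (l ×ˢ 𝓝 x) (𝓝 (h x))) :
    TendstoLocallyUniformlyOn f h l s := by
  refine hs.tendstoLocallyUniformlyOn_iff_forall_tendsto.2 fun x hx ↦ ?_
  have hlim := (hh.continuousAt (hs.mem_nhds hx)).tendsto.comp (tendsto_snd (f := l))
  exact (hlim.prodMk_nhds (hf x hx)).mono_right (nhds_le_uniformity _)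

lemma tendstoLocallyUniformlyOn_mul_of_isBigO_one {α ι : Type*} [TopologicalSpace α]
    {l : Filter ι} {u v : ι → α → ℝ} {f h : α → ℝ} {s : Set α}
    (hu : TendstoLocallyUniformlyOn u f l s) (hv : TendstoLocallyUniformlyOn v h l s)
    (hf : ∀ x ∈ s, f =O[𝓝[s] x] (fun _ ↦ (1 : ℝ))) (hh : ContinuousOn h s) :
    TendstoLocallyUniformlyOn (fun i x ↦ u i x * v i x) (fun x ↦ f x * h x) l s := by
  have hbdd {w : α → ℝ} {x : α} (hw : w =O[𝓝[s] x] (fun _ ↦ (1 : ℝ))) :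
      (𝓝[s] x).IsBoundedUnder (· ≤ ·) fun y ↦ dist (w y) 0 := by
    simpa only [dist_zero_right] using (isBigO_one_iff ℝ).1 hw
  exact hu.fun_mul₀_of_isBoundedUnder hv (fun x hx ↦ hbdd (hf x hx))
    fun x hx ↦ hbdd ((hh x hx).tendsto.isBigO_one ℝ)

lemma tendstoLocallyUniformlyOn_kthExtremeRatio {F G : ℝ → ℝ} {a b : ℕ → ℝ} (k : ℕ)
    (hF_nonneg : ∀ x, 0 ≤ F x) (hF : ∀ r, 0 < F r → MonotoneOn F (Iic r)) (ha : ∀ n, 0 < a n)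
    (hG : Continuous G)
    (hconv : ∀ x, Tendsto (fun n ↦ F (a n * x + b n) ^ n) atTop (𝓝 (G x))) :
    TendstoLocallyUniformlyOn (fun n x ↦ kthExtremeRatio k n (F (a n * x + b n)))
      (fun x ↦ (-log (G x)) ^ (k - 1) / (k - 1)!) atTop {x | 0 < G x} := by
  refine tendstoLocallyUniformlyOn_of_tendsto_prod_nhds (isOpen_lt continuous_const hG)
    (((hG.continuousOn.log fun _ hx ↦ hx.ne').neg.pow _).div_const _) fun x hx ↦ ?_
  exact tendsto_kthExtremeRatio k (fun _ ↦ hF_nonneg _) tendsto_fst hx.ne'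
    (tendsto_prod_nhds_of_monotoneOn_Iic
      (fun n r ↦ monotoneOn_Iic_comp_affine_pow hF_nonneg hF (ha n) (b n) n) hconv
      hG.continuousAt hx)

end Development

/-- local uniform convergence of the density of the normalized k-th
largest order statistic to `g(x)(-log G(x))^{k-1}/(k-1)!` on `{x : G x > 0}`. -/
theorem kth_extreme_density_locally_uniform_convergence
    (F f G g : ℝ → ℝ) (a b : ℕ → ℝ) (k : ℕ) (hk : 1 ≤ k)
    (ha : ∀ n, 0 < a n)
    -- F is an absolutely continuous distribution function with density f
    (hf_nonneg : ∀ x, 0 ≤ f x)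
    (hF : ∀ x, F x = ∫ t in Set.Iic x, f t)
    -- G is a continuous nondegenerate distribution function with density g
    (hG_cont : Continuous G)
    (hG_nondeg : ∃ x, 0 < G x ∧ G x < 1)
    (hG_mono : Monotone G)
    (hg : ∀ x, HasDerivAt G (g x) x)
    -- F^n(a_n x + b_n) → G(x) for every x
    (hconv : ∀ x : ℝ, Tendsto (fun n : ℕ => F (a n * x + b n) ^ n) atTop (nhds (G x)))
    -- g_n → g locally uniformly on {x : G x > 0}
    (hgn : TendstoLocallyUniformlyOn
      (fun (n : ℕ) (x : ℝ) => n * a n * f (a n * x + b n) * F (a n * x + b n) ^ (n - 1))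
      g atTop {x | 0 < G x}) :
    TendstoLocallyUniformlyOn
      (fun (n : ℕ) (x : ℝ) =>
        ((n.factorial : ℝ) / ((k - 1).factorial * (n - k).factorial)) *
          a n * f (a n * x + b n) * F (a n * x + b n) ^ (n - k) *
          (1 - F (a n * x + b n)) ^ (k - 1))
      (fun x => g x * (- Real.log (G x)) ^ (k - 1) / (k - 1).factorial)
      atTop {x | 0 < G x} := by
  have hF_nonneg (x : ℝ) : 0 ≤ F x := by
    rw [hF]
    exact integral_nonneg hf_nonneg
  have hF_mono (r : ℝ) (hr : 0 < F r) : MonotoneOn F (Set.Iic r) := by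
    rw [hF] at hr
    exact (monotoneOn_Iic_integral_of_pos hf_nonneg hr).congr fun x _ ↦ (hF x).symm
  have hratio := tendstoLocallyUniformlyOn_kthExtremeRatio k hF_nonneg hF_mono ha hG_cont hconv
  have hprod := tendstoLocallyUniformlyOn_mul_of_isBigO_one hgn hratio
    (fun _ hx ↦ (isBigO_one_density hF_nonneg hF_mono ha hG_mono hg hconv hx).mono
      nhdsWithin_le_nhds)
    (((hG_cont.continuousOn.log fun _ hx ↦ hx.ne').neg.pow _).div_const _)
  simp only [← mul_div_assoc] at hprod
  refine hprod.congr_inseparable ?_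
  filter_upwards [eventually_gt_atTop k] with n hn _ _
  exact .of_eq (mul_kthExtremeRatio hk hn _ _ _)
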